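/- Suppose there exist constants c > 0 and C > 0 such that for every Boolean function f : 𝔽₂ⁿ → {1,−1} with Fourier sparsity s ≥ 2, there is an affine subspace of 𝔽₂ⁿ of co-dimension at most C·(log₂ s)^c on which f is constant. Then there exists a constant C' > 0 such that every Boolean function f with Fourier sparsity s ≥ 2 satisfies dim(f) ≤ C' · √s · (log₂ s)^c. -/

import Mathlib

/-!
Let `f` be a Boolean function with Fourier support `S` of size `s`, and let `L = (log₂ s)^c`.

Instead of restricting `f` to an affine subspace, `f` is pulled back along affine maps
`x ↦ P x + b` of `𝔽₂ⁿ` to itself; the range of `P` plays the role of the subspace. The Fourier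
support of the pullback lies in the folded set `S ∘ P = {γ ∘ P : γ ∈ S}` (`fCoeff_pullback`), whose
size `k` counts the cosets, modulo the forms killed by `P`, that meet `S`.

*One round of folding.* By the uncertainty principle (`uncertainty`), a coset containing `l`
elements of `S` survives in the pullback for at least a `1 / l` fraction of the translates `b`.
Averaging over `b` and applying Cauchy–Schwarz yields some `b` for which the pullback `g` has
sparsity `t ≥ k² / s` (`exists_large_pullback`). If `k² > 4 s`, then `t ≥ 4`, so by hypothesis `g` is
constant on an affine subspace of codimension `d ≤ C L`. This subspace is the range of some
`x ↦ Q x + x₀` (`exists_param`). Since all nontrivial Fourier coefficients of `x ↦ g (Q x + x₀)`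
vanish, no character of `g` can be alone in a nontrivial fibre of `δ ↦ δ ∘ Q`
(`exists_merge_of_const`). Hence passing from `P` to `P ∘ Q` reduces the number of folded characters
by at least `(t - 1) / 2 ≥ k² / (4 s)`, while the dimension of their span drops by at most `d`
(`finrank_span_le_comp`).

*Iteration.* The decrement makes `1 / k` grow by at least `1 / (4 s)` per round, so after
`m = ⌈2 √s⌉` rounds at most `2 √s` folded characters are left (`exists_folding`). They span at most
`2 √s` dimensions, and at most `m C L` dimensions were lost on the way, so
`dim f ≤ 2 √s + m C L ≤ (3 C + 2) √s L`.
-/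

/-- The dual space of `𝔽₂ⁿ`: linear forms `𝔽₂ⁿ → 𝔽₂`. -/
abbrev DualF (n : ℕ) : Type := (Fin n → ZMod 2) →ₗ[ZMod 2] ZMod 2

/-- A Boolean function takes values in `{1, -1} ⊆ ℝ`. -/
def IsBooleanFn (n : ℕ) (f : (Fin n → ZMod 2) → ℝ) : Prop :=
  ∀ x, f x = 1 ∨ f x = -1

/-- Fourier coefficient `f̂(γ) = 2⁻ⁿ Σ_x f(x) (-1)^(γ x)`. -/
noncomputable def fCoeff (n : ℕ) (f : (Fin n → ZMod 2) → ℝ) (γ : DualF n) : ℝ :=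
  (2 ^ n : ℝ)⁻¹ * ∑ x : Fin n → ZMod 2, f x * (-1 : ℝ) ^ (γ x).val

/-- Fourier support. -/
noncomputable def fSupp (n : ℕ) (f : (Fin n → ZMod 2) → ℝ) : Set (DualF n) :=
  {γ | fCoeff n f γ ≠ 0}

/-- Fourier sparsity. -/
noncomputable def fSpar (n : ℕ) (f : (Fin n → ZMod 2) → ℝ) : ℕ :=
  (fSupp n f).ncard

/-- Fourier dimension: dimension of the 𝔽₂-span of the Fourier support. -/
noncomputable def fDim (n : ℕ) (f : (Fin n → ZMod 2) → ℝ) : ℕ :=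
  Module.finrank (ZMod 2) (Submodule.span (ZMod 2) (fSupp n f))

open Finset

/-! ### Characters and Fourier inversion on `𝔽₂ⁿ` -/

noncomputable instance instFintypeDualF (n : ℕ) : Fintype (DualF n) :=
  have : Finite (DualF n) := DFunLike.finite _
  Fintype.ofFinite _

/-- The additive character `a ↦ (-1)^a` of `𝔽₂`. -/
noncomputable def sgn (a : ZMod 2) : ℝ := (-1 : ℝ) ^ a.val

lemma sgn_zero : sgn 0 = 1 := by simp [sgn]

lemma sgn_one : sgn 1 = -1 := by simp [sgn, ZMod.val_one]

lemma zmod2_cases (a : ZMod 2) : a = 0 ∨ a = 1 := by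
  revert a; decide

lemma sgn_add (a b : ZMod 2) : sgn (a + b) = sgn a * sgn b := by
  have h : (1 : ZMod 2) + 1 = 0 := by decide
  rcases zmod2_cases a with rfl | rfl <;> rcases zmod2_cases b with rfl | rfl <;>
    simp [sgn_zero, sgn_one, h]

lemma abs_sgn (a : ZMod 2) : |sgn a| = 1 := by
  rcases zmod2_cases a with rfl | rfl <;> simp [sgn_zero, sgn_one]

/-- A nontrivial character of a finite group has zero sum. -/
lemma sum_sgn_eq_zero {G : Type*} [AddCommGroup G] [Fintype G] (φ : G → ZMod 2)
    (hφ : ∀ x y, φ (x + y) = φ x + φ y) (x₀ : G) (hx₀ : φ x₀ ≠ 0) : ∑ x, sgn (φ x) = 0 := by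
  have h1 : φ x₀ = 1 := (zmod2_cases _).resolve_left hx₀
  have h2 : ∑ x, sgn (φ (x + x₀)) = ∑ x, sgn (φ x) :=
    Fintype.sum_equiv (Equiv.addRight x₀) _ _ (fun x => rfl)
  simp only [hφ, sgn_add, h1, sgn_one, mul_neg, mul_one, sum_neg_distrib] at h2
  linarith

lemma card_V (n : ℕ) : Fintype.card (Fin n → ZMod 2) = 2 ^ n := by
  simp [ZMod.card]

lemma card_dualF (n : ℕ) : Fintype.card (DualF n) = 2 ^ n := by
  have h := Module.card_eq_pow_finrank (K := ZMod 2) (V := DualF n)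
  rw [show Module.finrank (ZMod 2) (DualF n) = n from by
    exact Subspace.dual_finrank_eq.trans (Module.finrank_fin_fun _)] at h
  simpa [ZMod.card] using h

open scoped Classical in
lemma sum_sgn_form (n : ℕ) (γ : DualF n) :
    ∑ x, sgn (γ x) = if γ = 0 then (2 ^ n : ℝ) else 0 := by
  split_ifs with h
  · subst h
    simp [sgn_zero]
  · obtain ⟨x₀, hx₀⟩ : ∃ x, γ x ≠ 0 := by
      by_contra! hc
      exact h (LinearMap.ext hc)
    exact sum_sgn_eq_zero (fun x => γ x) (map_add γ) x₀ hx₀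

open scoped Classical in
lemma sum_sgn_point (n : ℕ) (x : Fin n → ZMod 2) :
    ∑ γ : DualF n, sgn (γ x) = if x = 0 then (2 ^ n : ℝ) else 0 := by
  split_ifs with h
  · subst h
    simp [sgn_zero, card_dualF]
  · obtain ⟨γ₀, hγ₀⟩ : ∃ γ : DualF n, γ x ≠ 0 := by
      by_contra! hc
      exact h ((Module.forall_dual_apply_eq_zero_iff (ZMod 2) x).1 hc)
    exact sum_sgn_eq_zero (fun γ : DualF n => γ x) (fun _ _ => rfl) γ₀ hγ₀

lemma fCoeff_eq (n : ℕ) (f : (Fin n → ZMod 2) → ℝ) (γ : DualF n) :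
    fCoeff n f γ = (2 ^ n : ℝ)⁻¹ * ∑ x, f x * sgn (γ x) := rfl

lemma add_eq_zero_iff_char_two {M : Type*} [AddCommGroup M] [Module (ZMod 2) M] (x y : M) :
    x + y = 0 ↔ x = y := by
  have h : y + y = 0 := by
    rw [← two_smul (ZMod 2) y, show (2 : ZMod 2) = 0 by decide, zero_smul]
  rw [add_eq_zero_iff_eq_neg, ← eq_neg_of_add_eq_zero_left h]

/-- Fourier inversion. -/
lemma fourier_inversion (n : ℕ) (f : (Fin n → ZMod 2) → ℝ) (x : Fin n → ZMod 2) :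
    ∑ γ, fCoeff n f γ * sgn (γ x) = f x := by
  classical
  have h2 : (2 ^ n : ℝ) ≠ 0 := by positivity
  calc ∑ γ, fCoeff n f γ * sgn (γ x)
      = ∑ γ : DualF n, ∑ y, (2 ^ n : ℝ)⁻¹ * f y * sgn (γ (y + x)) := by
        refine sum_congr rfl fun γ _ => ?_
        rw [fCoeff_eq, mul_sum, sum_mul]
        refine sum_congr rfl fun y _ => ?_
        rw [map_add, sgn_add]; ring
    _ = ∑ y, (2 ^ n : ℝ)⁻¹ * f y * ∑ γ : DualF n, sgn (γ (y + x)) := by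
        rw [sum_comm]
        exact sum_congr rfl fun y _ => (mul_sum _ _ _).symm
    _ = f x := by
        simp only [sum_sgn_point, add_eq_zero_iff_char_two]
        simp
        field_simp

/-! ### Affine pullbacks and the uncertainty principle -/

open scoped Classical in
/-- The Fourier expansion of an affine pullback `x ↦ f (P x + b)`: the coefficients of `f` are
added up, with signs given by `b`, along the fibres of `γ ↦ γ ∘ P`. -/
lemma fCoeff_pullback (n : ℕ) (f : (Fin n → ZMod 2) → ℝ)
    (P : (Fin n → ZMod 2) →ₗ[ZMod 2] (Fin n → ZMod 2)) (b : Fin n → ZMod 2) (δ : DualF n) :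
    fCoeff n (fun x => f (P x + b)) δ
      = ∑ γ with γ.comp P = δ, fCoeff n f γ * sgn (γ b) := by
  have h2 : (2 ^ n : ℝ) ≠ 0 := by positivity
  calc fCoeff n (fun x => f (P x + b)) δ
      = ∑ x, ∑ γ, (2 ^ n : ℝ)⁻¹ * (fCoeff n f γ * sgn (γ b)) * sgn ((γ.comp P + δ) x) := by
        rw [fCoeff_eq, mul_sum]
        refine sum_congr rfl fun x _ => ?_
        rw [← fourier_inversion n f (P x + b), sum_mul, mul_sum]
        refine sum_congr rfl fun γ _ => ?_
        rw [map_add, sgn_add, LinearMap.add_apply, sgn_add, LinearMap.comp_apply]; ring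
    _ = ∑ γ, (2 ^ n : ℝ)⁻¹ * (fCoeff n f γ * sgn (γ b)) * ∑ x, sgn ((γ.comp P + δ) x) := by
        rw [sum_comm]
        exact sum_congr rfl fun y _ => (mul_sum _ _ _).symm
    _ = _ := by
        rw [sum_filter]
        refine sum_congr rfl fun γ _ => ?_
        simp only [sum_sgn_form, add_eq_zero_iff_char_two]
        split_ifs
        · field_simp
        · simp

/-- Parseval's identity for a trigonometric polynomial with spectrum in `A`. -/
lemma parseval (n : ℕ) (A : Finset (DualF n)) (a : DualF n → ℝ) :
    ∑ x, (∑ γ ∈ A, a γ * sgn (γ x)) ^ 2 = 2 ^ n * ∑ γ ∈ A, a γ ^ 2 := by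
  classical
  calc ∑ x, (∑ γ ∈ A, a γ * sgn (γ x)) ^ 2
      = ∑ x, ∑ γ ∈ A, ∑ δ ∈ A, a γ * a δ * sgn ((γ + δ) x) := by
        refine sum_congr rfl fun x _ => ?_
        rw [sq, sum_mul_sum]
        refine sum_congr rfl fun γ _ => sum_congr rfl fun δ _ => ?_
        rw [LinearMap.add_apply, sgn_add]; ring
    _ = ∑ γ ∈ A, ∑ δ ∈ A, a γ * a δ * ∑ x, sgn ((γ + δ) x) := by
        rw [sum_comm]
        refine sum_congr rfl fun γ _ => ?_
        rw [sum_comm]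
        exact sum_congr rfl fun y _ => (mul_sum _ _ _).symm
    _ = _ := by
        rw [mul_sum]
        refine sum_congr rfl fun γ hγ => ?_
        simp only [sum_sgn_form, add_eq_zero_iff_char_two, mul_ite, mul_zero]
        rw [sum_ite_eq, if_pos hγ]; ring

open scoped Classical in
/-- Uncertainty principle: a nonzero function with at most `#A` nonzero Fourier coefficients is
nonzero on at least a `1 / #A` fraction of the points. Cauchy–Schwarz bounds the sup norm by
`√#A` times the normalised `L²` norm. -/
lemma uncertainty (n : ℕ) (A : Finset (DualF n)) (a : DualF n → ℝ)
    (ha : ∃ γ ∈ A, a γ ≠ 0) :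
    2 ^ n ≤ #{x : Fin n → ZMod 2 | ∑ γ ∈ A, a γ * sgn (γ x) ≠ 0} * #A := by
  set h : (Fin n → ZMod 2) → ℝ := fun x => ∑ γ ∈ A, a γ * sgn (γ x) with hh
  set N : Finset (Fin n → ZMod 2) := {x | h x ≠ 0} with hN
  have hpos : 0 < ∑ γ ∈ A, a γ ^ 2 := by
    obtain ⟨γ, hγ, h0⟩ := ha
    exact sum_pos' (fun _ _ => sq_nonneg _) ⟨γ, hγ, by positivity⟩
  have hsup : ∀ x, h x ^ 2 ≤ #A * ∑ γ ∈ A, a γ ^ 2 := fun x => by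
    have h1 := sq_sum_le_card_mul_sum_sq (s := A) (f := fun γ => a γ * sgn (γ x))
    refine h1.trans (le_of_eq ?_)
    congr 1
    refine sum_congr rfl fun γ _ => ?_
    rw [mul_pow, ← sq_abs (sgn _), abs_sgn]; simp
  have hsum : ∑ x, h x ^ 2 ≤ #N * (#A * ∑ γ ∈ A, a γ ^ 2) := by
    rw [← nsmul_eq_mul, ← sum_const,
      ← sum_subset (subset_univ N) (f := fun x => h x ^ 2) (fun x _ hx => by
        simpa [hN] using hx)]
    exact sum_le_sum fun x _ => hsup x
  rw [hh, parseval, ← mul_assoc] at hsum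
  exact_mod_cast le_of_mul_le_mul_right hsum hpos

/-! ### Folding the Fourier support -/

open scoped Classical in
/-- The Fourier support as a `Finset`. -/
noncomputable def suppF (n : ℕ) (f : (Fin n → ZMod 2) → ℝ) : Finset (DualF n) :=
  {γ | fCoeff n f γ ≠ 0}

lemma mem_suppF {n : ℕ} {f : (Fin n → ZMod 2) → ℝ} {γ : DualF n} :
    γ ∈ suppF n f ↔ fCoeff n f γ ≠ 0 := by simp [suppF]

lemma coe_suppF (n : ℕ) (f : (Fin n → ZMod 2) → ℝ) : (suppF n f : Set (DualF n)) = fSupp n f := by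
  ext; simp [suppF, fSupp]

lemma fSpar_eq (n : ℕ) (f : (Fin n → ZMod 2) → ℝ) : fSpar n f = #(suppF n f) := by
  rw [fSpar, ← coe_suppF, Set.ncard_coe_finset]

open scoped Classical in
/-- The image of the Fourier support of `f` under `γ ↦ γ ∘ P`. Its elements correspond to the
cosets of the space of forms vanishing on the range of `P` that meet the Fourier support. -/
noncomputable def folded (n : ℕ) (f : (Fin n → ZMod 2) → ℝ)
    (P : (Fin n → ZMod 2) →ₗ[ZMod 2] (Fin n → ZMod 2)) : Finset (DualF n) :=
  (suppF n f).image fun γ => γ.comp P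

open scoped Classical in
/-- `fCoeff_pullback` with the sum restricted to the Fourier support. -/
lemma fCoeff_pullback' (n : ℕ) (f : (Fin n → ZMod 2) → ℝ)
    (P : (Fin n → ZMod 2) →ₗ[ZMod 2] (Fin n → ZMod 2)) (b : Fin n → ZMod 2) (δ : DualF n) :
    fCoeff n (fun x => f (P x + b)) δ
      = ∑ γ ∈ suppF n f with γ.comp P = δ, fCoeff n f γ * sgn (γ b) := by
  rw [fCoeff_pullback]
  symm
  refine sum_subset (filter_subset_filter _ (subset_univ _)) fun γ h1 h2 => ?_
  have : fCoeff n f γ = 0 := by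
    by_contra h
    exact h2 (mem_filter.2 ⟨mem_suppF.2 h, (mem_filter.1 h1).2⟩)
  rw [this, zero_mul]

lemma suppF_pullback_subset (n : ℕ) (f : (Fin n → ZMod 2) → ℝ)
    (P : (Fin n → ZMod 2) →ₗ[ZMod 2] (Fin n → ZMod 2)) (b : Fin n → ZMod 2) :
    suppF n (fun x => f (P x + b)) ⊆ folded n f P := by
  classical
  intro δ hδ
  rw [mem_suppF, fCoeff_pullback'] at hδ
  obtain ⟨γ, hγ, -⟩ := exists_ne_zero_of_sum_ne_zero hδ
  rw [mem_filter] at hγ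
  exact mem_image.2 ⟨γ, hγ⟩

/-- Some translate `b` keeps at least `k² / s` of the `k` folded characters alive. The expected
number of survivors over a uniform `b` is at least `∑ 1 / l_δ` by the uncertainty principle, where
the fibre sizes `l_δ` add up to `s`. -/
lemma exists_large_pullback (n : ℕ) (f : (Fin n → ZMod 2) → ℝ)
    (P : (Fin n → ZMod 2) →ₗ[ZMod 2] (Fin n → ZMod 2)) :
    ∃ b, #(folded n f P) ^ 2 ≤ #(suppF n (fun x => f (P x + b))) * #(suppF n f) := by
  classical
  set S := suppF n f with hS
  set T := folded n f P with hT
  set l : DualF n → ℕ := fun δ => #{γ ∈ S | γ.comp P = δ} with hl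
  set N : DualF n → ℕ := fun δ =>
    #{b : Fin n → ZMod 2 | fCoeff n (fun x => f (P x + b)) δ ≠ 0} with hN
  have hNl : ∀ δ ∈ T, 2 ^ n ≤ N δ * l δ := fun δ hδ => by
    obtain ⟨γ, hγ, hγδ⟩ := mem_image.1 hδ
    have := uncertainty n {γ ∈ S | γ.comp P = δ} (fCoeff n f)
      ⟨γ, mem_filter.2 ⟨hγ, hγδ⟩, mem_suppF.1 hγ⟩
    simpa only [hN, hl, fCoeff_pullback'] using this
  have hsl : ∑ δ ∈ T, l δ = #S :=
    (card_eq_sum_card_image (fun γ : DualF n => γ.comp P) S).symm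
  have hdouble : ∑ b, #(suppF n (fun x => f (P x + b))) = ∑ δ ∈ T, N δ := by
    have h1 : ∀ b, #(suppF n (fun x => f (P x + b)))
        = #{δ ∈ T | fCoeff n (fun x => f (P x + b)) δ ≠ 0} := fun b => by
      congr 1
      ext δ
      rw [mem_filter, ← mem_suppF]
      exact ⟨fun h => ⟨suppF_pullback_subset n f P b h, h⟩, fun h => h.2⟩
    simp only [h1, hN, card_filter]
    exact sum_comm
  have hcs : (#T : ℝ) ^ 2 * 2 ^ n ≤ (∑ δ ∈ T, (N δ : ℝ)) * ∑ δ ∈ T, (l δ : ℝ) := by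
    have h1 := sum_sq_le_sum_mul_sum_of_sq_le_mul T
      (r := fun δ => Real.sqrt (N δ * l δ)) (f := fun δ => (N δ : ℝ)) (g := fun δ => (l δ : ℝ))
      (fun _ _ => by positivity) (fun _ _ => by positivity)
      (fun _ _ => (Real.sq_sqrt (by positivity)).le)
    refine le_trans ?_ h1
    have h2 : (#T : ℝ) * Real.sqrt (2 ^ n) ≤ ∑ δ ∈ T, Real.sqrt (N δ * l δ) := by
      rw [← nsmul_eq_mul, ← sum_const]
      exact sum_le_sum fun δ hδ => Real.sqrt_le_sqrt (by exact_mod_cast hNl δ hδ)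
    have h3 := pow_le_pow_left₀ (by positivity) h2 2
    rwa [mul_pow, Real.sq_sqrt (by positivity)] at h3
  have hcs' : #T ^ 2 * 2 ^ n ≤ (∑ b, #(suppF n (fun x => f (P x + b)))) * #S := by
    rw [hdouble, ← hsl]
    exact_mod_cast hcs
  by_contra! hlt
  have : ∑ b, #(suppF n (fun x => f (P x + b))) * #S < ∑ _b : Fin n → ZMod 2, #T ^ 2 :=
    sum_lt_sum_of_nonempty univ_nonempty fun b _ => hlt b
  rw [← sum_mul, sum_const, card_univ, card_V, smul_eq_mul] at this
  linarith

/-! ### Merging of characters along a constant restriction -/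

/-- If no fibre of `q` on `X ⊆ T`, except possibly the one over `z`, is a singleton, then `q`
identifies at least `(#X - 1) / 2` elements of `T`. -/
lemma card_image_merge {α : Type*} [DecidableEq α] (T X : Finset α) (hX : X ⊆ T) (q : α → α)
    (z : α) (hq : ∀ y ∈ X, q y ≠ z → ∃ y' ∈ X, y' ≠ y ∧ q y' = q y) :
    2 * #(T.image q) + #X ≤ 2 * #T + 1 := by
  have h1 : 2 * #(X.image q) ≤ #X + 1 := by
    have hfib : ∀ η ∈ X.image q, 2 ≤ #{y ∈ X | q y = η} + if η = z then 1 else 0 := by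
      intro η hη
      obtain ⟨y, hy, rfl⟩ := mem_image.1 hη
      split_ifs with h
      · have : 0 < #{y' ∈ X | q y' = q y} := card_pos.2 ⟨y, mem_filter.2 ⟨hy, rfl⟩⟩
        omega
      · obtain ⟨y', hy', hne, he⟩ := hq y hy h
        exact one_lt_card.2 ⟨y', mem_filter.2 ⟨hy', he⟩, y, mem_filter.2 ⟨hy, rfl⟩, hne⟩
    have h2 := sum_le_sum hfib
    rw [sum_add_distrib, ← card_eq_sum_card_image, sum_const, smul_eq_mul] at h2
    have h3 : ∑ η ∈ X.image q, (if η = z then 1 else 0) ≤ 1 := by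
      rw [sum_ite_eq']; split_ifs <;> simp
    omega
  have h2 : #(T.image q) ≤ #(X.image q) + #((T \ X).image q) := by
    rw [← union_sdiff_of_subset hX, image_union, union_sdiff_of_subset hX]
    exact card_union_le _ _
  have h3 : #((T \ X).image q) ≤ #(T \ X) := card_image_le
  have h4 := card_sdiff_add_card_eq_card hX
  omega

/-- If the pullback of `g` along `x ↦ Q x + x₀` is constant, its nonzero Fourier coefficients
vanish, so surviving characters of `g` cannot be alone in their fibre under `γ ↦ γ ∘ Q`. -/
lemma exists_merge_of_const (n : ℕ) (g : (Fin n → ZMod 2) → ℝ)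
    (Q : (Fin n → ZMod 2) →ₗ[ZMod 2] (Fin n → ZMod 2)) (x₀ : Fin n → ZMod 2) (v : ℝ)
    (hg : ∀ x, g (Q x + x₀) = v) (δ : DualF n) (hδ : δ ∈ suppF n g) (hne : δ.comp Q ≠ 0) :
    ∃ δ' ∈ suppF n g, δ' ≠ δ ∧ δ'.comp Q = δ.comp Q := by
  classical
  by_contra! hc
  have h1 := fCoeff_pullback' n g Q x₀ (δ.comp Q)
  have h2 : ({γ ∈ suppF n g | γ.comp Q = δ.comp Q} : Finset (DualF n)) = {δ} := by
    ext γ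
    rw [mem_filter, mem_singleton]
    constructor
    · rintro ⟨h, h'⟩
      by_contra hh
      exact hc γ h hh h'
    · rintro rfl
      exact ⟨hδ, rfl⟩
  rw [h2, sum_singleton] at h1
  have h3 : fCoeff n (fun x => g (Q x + x₀)) (δ.comp Q) = 0 := by
    simp only [hg]
    rw [fCoeff_eq, ← mul_sum, sum_sgn_form, if_neg hne]
    simp
  rw [h3] at h1
  rcases mul_eq_zero.1 h1.symm with h | h
  · exact mem_suppF.1 hδ h
  · have := abs_sgn (δ x₀)
    rw [h] at this
    simp at this

/-- An affine subspace cut out by `d` independent equations is the range of some `x ↦ Q x + x₀`,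
where the forms killed by `Q` are spanned by the `d` given ones. -/
lemma exists_param (n d : ℕ) (γ : Fin d → DualF n) (b : Fin d → ZMod 2)
    (hγ : LinearIndependent (ZMod 2) γ) :
    ∃ (Q : (Fin n → ZMod 2) →ₗ[ZMod 2] (Fin n → ZMod 2)) (x₀ : Fin n → ZMod 2),
      (∀ x i, γ i (Q x + x₀) = b i) ∧
      ∀ δ : DualF n, δ.comp Q = 0 → δ ∈ Submodule.span (ZMod 2) (Set.range γ) := by
  set W : Submodule (ZMod 2) (Module.Dual (ZMod 2) (Fin n → ZMod 2)) :=
    Submodule.span (ZMod 2) (Set.range γ) with hW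
  obtain ⟨p, hp⟩ := (W.dualCoannihilator).subtype.exists_leftInverse_of_injective
    (Submodule.ker_subtype _)
  have hsurj : Function.Surjective (LinearMap.pi γ) := by
    have h := span_flip_eq_top_iff_linearIndependent.2
      (hγ.map' (LinearMap.ltoFun (ZMod 2) (Fin n → ZMod 2) (ZMod 2) (ZMod 2))
        (LinearMap.ker_eq_bot.2 DFunLike.coe_injective))
    rw [← LinearMap.range_eq_top, ← h, ← Submodule.span_eq (LinearMap.range _),
      LinearMap.coe_range]
    rfl
  obtain ⟨x₀, hx₀⟩ := hsurj b
  refine ⟨W.dualCoannihilator.subtype.comp p, x₀, fun x i => ?_, fun δ hδ => ?_⟩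
  · have h1 : γ i (W.dualCoannihilator.subtype (p x)) = 0 :=
      (Submodule.mem_dualCoannihilator _).1 (p x).2 (γ i) (Submodule.subset_span ⟨i, rfl⟩)
    rw [map_add, LinearMap.comp_apply, h1, zero_add, ← hx₀]
    rfl
  · rw [← Subspace.dualCoannihilator_dualAnnihilator_eq (W := W), Submodule.mem_dualAnnihilator]
    intro w hw
    have h1 := LinearMap.congr_fun hδ w
    have h2 := LinearMap.congr_fun hp ⟨w, hw⟩
    simp only [LinearMap.comp_apply, Submodule.subtype_apply, LinearMap.id_apply,
      LinearMap.zero_apply] at h1 h2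
    rwa [h2] at h1

/-! ### Loss of dimension -/

lemma finrank_le_map_add {K U : Type*} [Field K] [AddCommGroup U] [Module K U]
    [FiniteDimensional K U] (E : U →ₗ[K] U) (M W : Submodule K U) (hW : LinearMap.ker E ≤ W) :
    Module.finrank K M ≤ Module.finrank K (M.map E) + Module.finrank K W := by
  have h2 := (E.domRestrict M).finrank_range_add_finrank_ker
  rw [LinearMap.range_domRestrict] at h2
  have h3 : Module.finrank K (LinearMap.ker (E.domRestrict M)) ≤ Module.finrank K W := by
    rw [(Submodule.equivMapOfInjective _ M.injective_subtype
      (LinearMap.ker (E.domRestrict M))).finrank_eq]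
    refine Submodule.finrank_mono ?_
    rintro _ ⟨δ, hδ, rfl⟩
    exact hW hδ
  omega

/-- Composing with a `Q` that kills only a `d`-dimensional space of forms loses dimension at
most `d`. -/
lemma finrank_span_le_comp (n d : ℕ) (γ : Fin d → DualF n)
    (Q : (Fin n → ZMod 2) →ₗ[ZMod 2] (Fin n → ZMod 2))
    (hQ : ∀ δ : DualF n, δ.comp Q = 0 → δ ∈ Submodule.span (ZMod 2) (Set.range γ))
    (T : Set (DualF n)) :
    Module.finrank (ZMod 2) (Submodule.span (ZMod 2) T) ≤
      Module.finrank (ZMod 2)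
        (Submodule.span (ZMod 2) ((fun δ : DualF n => δ.comp Q) '' T)) + d := by
  set E : DualF n →ₗ[ZMod 2] DualF n := LinearMap.lcomp (ZMod 2) (ZMod 2) Q with hE
  have h1 : Submodule.span (ZMod 2) ((fun δ : DualF n => δ.comp Q) '' T)
      = (Submodule.span (ZMod 2) T).map E := by
    rw [Submodule.map_span]; rfl
  have h2 : Module.finrank (ZMod 2) (Submodule.span (ZMod 2) (Set.range γ)) ≤ d :=
    (finrank_range_le_card γ).trans (by simp)
  rw [h1]
  exact (finrank_le_map_add E (Submodule.span (ZMod 2) T) _ fun δ hδ => hQ δ hδ).trans (by gcongr)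

/-! ### Iterating the folding step -/

/-- The decrement `k - k' ≥ k² / (4 s)`, forced by `2 k' + t ≤ 2 k + 1` and `t s ≥ k² ≥ 4 s`,
propagates the bound `k m ≤ 4 s` from `m` to `m + 1`. -/
lemma decrement_arith (k k' m s t : ℝ) (hs : 0 < s) (hks : k ≤ s)
    (hm : 0 ≤ m) (h4 : 4 * s ≤ k ^ 2) (hts : k ^ 2 ≤ t * s) (hkk : 2 * k' + t ≤ 2 * k + 1)
    (hkm : k * m ≤ 4 * s) : k' * (m + 1) ≤ 4 * s := by
  have ht : 4 ≤ t := le_of_mul_le_mul_right (h4.trans hts) hs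
  have h1 : k' * (4 * s) ≤ k * (4 * s - k) := by nlinarith
  have h2 : (k' * (m + 1)) * (4 * s) ≤ (4 * s) * (4 * s) := by
    calc (k' * (m + 1)) * (4 * s) = (k' * (4 * s)) * (m + 1) := by ring
      _ ≤ (k * (4 * s - k)) * (m + 1) := by gcongr
      _ = (4 * s - k) * (k * m + k) := by ring
      _ ≤ (4 * s - k) * (4 * s + k) := by
        apply mul_le_mul_of_nonneg_left <;> linarith
      _ ≤ (4 * s) * (4 * s) := by nlinarith
  exact le_of_mul_le_mul_right h2 (by positivity)

/-- After `m` folding rounds, each losing at most `D` dimensions, the number of folded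
characters is at most `max (2 √s) (4 s / m)`. -/
lemma exists_folding (c C : ℝ) (hc : 0 < c) (hC : 0 < C)
    (hyp : ∀ (n : ℕ) (f : (Fin n → ZMod 2) → ℝ), IsBooleanFn n f → 2 ≤ fSpar n f →
      ∃ (d : ℕ) (γ : Fin d → DualF n) (b : Fin d → ZMod 2) (v : ℝ),
        (d : ℝ) ≤ C * (Real.logb 2 (fSpar n f)) ^ c ∧
        LinearIndependent (ZMod 2) γ ∧
        (∀ x, (∀ i, γ i x = b i) → f x = v))
    (n : ℕ) (f : (Fin n → ZMod 2) → ℝ) (hf : IsBooleanFn n f) (hs : 2 ≤ fSpar n f) (m : ℕ) :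
    ∃ P : (Fin n → ZMod 2) →ₗ[ZMod 2] (Fin n → ZMod 2),
      (fDim n f : ℝ) ≤
        Module.finrank (ZMod 2) (Submodule.span (ZMod 2) (folded n f P : Set (DualF n)))
          + m * (C * (Real.logb 2 (fSpar n f)) ^ c) ∧
      ((#(folded n f P) : ℝ) ^ 2 ≤ 4 * fSpar n f ∨ (#(folded n f P) : ℝ) * m ≤ 4 * fSpar n f) := by
  classical
  have hD : 0 ≤ C * (Real.logb 2 (fSpar n f)) ^ c := by
    have : 0 ≤ Real.logb 2 (fSpar n f) :=
      Real.logb_nonneg (by norm_num) (by exact_mod_cast (by omega : 1 ≤ fSpar n f))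
    positivity
  set D := C * (Real.logb 2 (fSpar n f)) ^ c with hDdef
  induction m with
  | zero =>
    refine ⟨LinearMap.id, ?_, Or.inr (by simp)⟩
    have h : folded n f LinearMap.id = suppF n f := by
      simp only [folded, LinearMap.comp_id, image_id']
    rw [h, coe_suppF, fDim]
    simp
  | succ m ih =>
    obtain ⟨P, hdim, hk⟩ := ih
    by_cases hsmall : (#(folded n f P) : ℝ) ^ 2 ≤ 4 * fSpar n f
    · exact ⟨P, by push_cast; linarith, Or.inl hsmall⟩
    replace hk := hk.resolve_left hsmall
    push Not at hsmall
    -- A translate whose pullback keeps at least `k² / s ≥ 4` characters.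
    obtain ⟨b, hb⟩ := exists_large_pullback n f P
    set g : (Fin n → ZMod 2) → ℝ := fun x => f (P x + b) with hg
    have hsub : suppF n g ⊆ folded n f P := suppF_pullback_subset n f P b
    have hT : #(folded n f P) ≤ fSpar n f := by
      rw [fSpar_eq]; exact card_image_le
    have hgs : fSpar n g ≤ fSpar n f := by
      rw [fSpar_eq n g]; exact (card_le_card hsub).trans hT
    rw [← fSpar_eq, ← fSpar_eq] at hb
    have hbR : (#(folded n f P) : ℝ) ^ 2 ≤ fSpar n g * fSpar n f := by exact_mod_cast hb
    have hspos : (0 : ℝ) < fSpar n f := by exact_mod_cast (by omega : 0 < fSpar n f)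
    have hg4 : (4 : ℝ) ≤ fSpar n g := le_of_mul_le_mul_right (hsmall.le.trans hbR) hspos
    have hg2 : 2 ≤ fSpar n g := by
      have : 4 ≤ fSpar n g := by exact_mod_cast hg4
      omega
    obtain ⟨d, γ, β, v, hd, hind, hconst⟩ := hyp n g (fun x => hf _) hg2
    obtain ⟨Q, x₀, hQ, hker⟩ := exists_param n d γ β hind
    have hfold : folded n f (P.comp Q) = (folded n f P).image fun δ => δ.comp Q := by
      simp only [folded, image_image]; rfl
    refine ⟨P.comp Q, ?_, Or.inr ?_⟩
    · have h1 := finrank_span_le_comp n d γ Q hker (folded n f P : Set (DualF n))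
      rw [← coe_image, ← hfold] at h1
      have h1R : (Module.finrank (ZMod 2)
          (Submodule.span (ZMod 2) (folded n f P : Set (DualF n))) : ℝ) ≤
          Module.finrank (ZMod 2)
            (Submodule.span (ZMod 2) (folded n f (P.comp Q) : Set (DualF n))) + d := by
        exact_mod_cast h1
      have h2 : (d : ℝ) ≤ D := by
        refine hd.trans ?_
        have hlog : Real.logb 2 (fSpar n g) ≤ Real.logb 2 (fSpar n f) :=
          Real.logb_le_logb_of_le (by norm_num) (by linarith) (by exact_mod_cast hgs)
        have hlog0 : 0 ≤ Real.logb 2 (fSpar n g) :=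
          Real.logb_nonneg (by norm_num) (by linarith)
        rw [hDdef]
        gcongr
      push_cast
      linarith
    · have hmerge := card_image_merge (folded n f P) (suppF n g) hsub (fun δ => δ.comp Q) 0
        (exists_merge_of_const n g Q x₀ v fun x => hconst _ (hQ x))
      rw [← hfold, ← fSpar_eq] at hmerge
      push_cast
      exact decrement_arith (#(folded n f P)) _ m (fSpar n f) (fSpar n g) hspos
        (by exact_mod_cast hT) (by positivity) hsmall.le hbR (by exact_mod_cast hmerge) hk

/-- If for some constants `c, C > 0` every Boolean function of Fourier sparsity `s ≥ 2`
is constant on some affine subspace of co-dimension at most `C * (log₂ s)^c`, then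
there is a constant `C' > 0` such that every Boolean function of Fourier sparsity
`s ≥ 2` has Fourier dimension at most `C' * √s * (log₂ s)^c`. -/
theorem dim_le_sqrt_sparsity_of_conjecture (c C : ℝ) (hc : 0 < c) (hC : 0 < C)
    (hyp : ∀ (n : ℕ) (f : (Fin n → ZMod 2) → ℝ), IsBooleanFn n f → 2 ≤ fSpar n f →
      ∃ (d : ℕ) (γ : Fin d → DualF n) (b : Fin d → ZMod 2) (v : ℝ),
        (d : ℝ) ≤ C * (Real.logb 2 (fSpar n f)) ^ c ∧
        LinearIndependent (ZMod 2) γ ∧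
        (∀ x, (∀ i, γ i x = b i) → f x = v)) :
    ∃ C' : ℝ, 0 < C' ∧
      ∀ (n : ℕ) (f : (Fin n → ZMod 2) → ℝ), IsBooleanFn n f → 2 ≤ fSpar n f →
        (fDim n f : ℝ) ≤
          C' * Real.sqrt (fSpar n f) * (Real.logb 2 (fSpar n f)) ^ c := by
  refine ⟨3 * C + 2, by positivity, fun n f hf hs => ?_⟩
  obtain ⟨P, hdim, hk⟩ := exists_folding c C hc hC hyp n f hf hs ⌈2 * Real.sqrt (fSpar n f)⌉₊
  set r := Real.sqrt (fSpar n f) with hr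
  set L := (Real.logb 2 (fSpar n f)) ^ c with hL
  have hsR : (2 : ℝ) ≤ fSpar n f := by exact_mod_cast hs
  have hrs : r ^ 2 = fSpar n f := Real.sq_sqrt (by linarith)
  have hr1 : 1 ≤ r := Real.one_le_sqrt.2 (by linarith)
  have hL1 : 1 ≤ L := by
    refine Real.one_le_rpow ?_ hc.le
    rw [Real.le_logb_iff_rpow_le (by norm_num) (by linarith)]
    simpa using hsR
  have hm_lo : 2 * r ≤ (⌈2 * r⌉₊ : ℝ) := Nat.le_ceil _
  have hm_hi : (⌈2 * r⌉₊ : ℝ) ≤ 3 * r := by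
    have := Nat.ceil_lt_add_one (show 0 ≤ 2 * r by linarith)
    linarith
  have hk2 : (#(folded n f P) : ℝ) ≤ 2 * r := by
    rw [← hrs] at hk
    rcases hk with hk | hk
    · exact le_of_sq_le_sq (by linarith) (by linarith)
    · have h1 : (#(folded n f P) : ℝ) * (2 * r) ≤ (2 * r) * (2 * r) := by
        calc _ ≤ (#(folded n f P) : ℝ) * (⌈2 * r⌉₊ : ℝ) := by gcongr
          _ ≤ 4 * r ^ 2 := hk
          _ = _ := by ring
      exact le_of_mul_le_mul_right h1 (by linarith)
  have hrank : (Module.finrank (ZMod 2)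
      (Submodule.span (ZMod 2) (folded n f P : Set (DualF n))) : ℝ) ≤ #(folded n f P) := by
    exact_mod_cast finrank_span_finset_le_card (folded n f P)
  calc (fDim n f : ℝ) ≤ 2 * r + ⌈2 * r⌉₊ * (C * L) := by linarith
    _ ≤ 2 * r * L + 3 * r * (C * L) := by
      have h1 : 0 ≤ C * L := by positivity
      have h2 : 2 * r * 1 ≤ 2 * r * L := by gcongr
      have h3 := mul_le_mul_of_nonneg_right hm_hi h1
      linarith
    _ = (3 * C + 2) * r * L := by ring
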